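/- Let (X,d) be a compact metric space, f: X → X a continuous map, and μ an ergodic f-invariant Borel probability measure. For ε > 0 and γ ∈ (0,1), let N^μ(n,ε,γ) denote the minimum number of Bowen balls B_n(x,ε) needed to cover a set of μ-measure at least 1 − γ. Then h_μ(f) = lim_{ε→0} liminf_{n→∞} (1/n) log N^μ(n,ε,γ) = lim_{ε→0} limsup_{n→∞} (1/n) log N^μ(n,ε,γ). -/

import Mathlib

open MeasureTheory Filter Set Manifold ProbabilityTheory

noncomputable section

/-- Birkhoff sum `S_n φ(x) = ∑_{i<n} φ(f^i x)`. -/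
def birkhoffSumS {M : Type*} (f : M → M) (φ : M → ℝ) (n : ℕ) (x : M) : ℝ :=
  ∑ i ∈ Finset.range n, φ (f^[i] x)

/-- Bowen ball `B_n(x, ε) = {y : d(f^i x, f^i y) < ε for all 0 ≤ i ≤ n-1}`. -/
def bowenBall {M : Type*} [PseudoMetricSpace M] (f : M → M) (n : ℕ) (ε : ℝ) (x : M) : Set M :=
  {y | ∀ i < n, dist (f^[i] x) (f^[i] y) < ε}

/-- Dynamical entropy of a finite partition at time `n`: `H(⋁_{i<n} f^{-i} P)`,
where `H(Q) = ∑_{A ∈ Q} -μ(A) log μ(A)`. -/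
def partitionDynH {M : Type*} [MeasurableSpace M] (μ : Measure M) (f : M → M)
    (P : Finset (Set M)) (n : ℕ) : ℝ :=
  ∑ ω : Fin n → {A // A ∈ P},
    Real.negMulLog ((μ (⋂ i : Fin n, f^[(i : ℕ)] ⁻¹' ((ω i : Set M)))).toReal)

/-- A finite measurable partition of the space. -/
def IsFinMeasPartition {M : Type*} [MeasurableSpace M] (P : Finset (Set M)) : Prop :=
  (∀ A ∈ P, MeasurableSet A) ∧ (⋃₀ (P : Set (Set M)) = Set.univ) ∧
    (P : Set (Set M)).PairwiseDisjoint id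

/-- Measure-theoretic (Kolmogorov–Sinai) entropy `h_μ(f)`, as an extended real:
the supremum over finite measurable partitions of `lim_n H(⋁_{i<n} f^{-i}P)/n`. -/
def metricEntropy {M : Type*} [MeasurableSpace M] (μ : Measure M) (f : M → M) : EReal :=
  ⨆ P : {P : Finset (Set M) // IsFinMeasPartition P},
    Filter.atTop.liminf fun n : ℕ => ((partitionDynH μ f P n / n : ℝ) : EReal)

/-- `N^μ(n,ε,γ)`: the minimum number of Bowen balls `B_n(x,ε)` needed to cover a set of
`μ`-measure at least `1 - γ`. -/
def katokCoverNum {X : Type*} [PseudoMetricSpace X] [MeasurableSpace X] (μ : Measure X)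
    (f : X → X) (n : ℕ) (ε γ : ℝ) : ℕ :=
  sInf {k : ℕ | ∃ S : Finset X, S.card = k ∧
    ENNReal.ofReal (1 - γ) ≤ μ (⋃ x ∈ S, bowenBall f n ε x)}

/-!
Label the points by a finite partition. If `r` exceeds the entropy rate of the labelling, then it
also exceeds the entropy of its `m`-step Markov approximation for some `m`; the mean ergodic
theorem makes the Markov weight of a typical word of length `n` at least `exp (-n r)`, so at most
`exp (n r)` words carry almost all of the mass. No almost-everywhere equipartition is needed. When
the cells have diameter less than `ε`, the points sharing a word lie in one Bowen ball, and this
bounds the cover numbers from above.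

If `r` is less than the entropy rate, a Fano-type inequality shows that any set of words of mass
bounded away from `0` has at least `exp (n r)` members. A Bowen ball of small radius meets few
words up to a small Hamming error: off a set of small measure the labels of nearby points agree,
and by Markov's inequality most orbits rarely visit that set. Hence few Bowen balls would give few
words, and this bounds the cover numbers from below.
-/

open scoped Finset Topology

section MeanErgodic

variable {X : Type*} [MeasurableSpace X] {μ : Measure X} {f : X → X} {g : X → ℝ}

/-- The Koopman operator `v ↦ v ∘ f` of a measure preserving map, acting on `L²(μ)`. -/
def koopman (hf : MeasurePreserving f μ μ) : Lp ℝ 2 μ →L[ℝ] Lp ℝ 2 μ :=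
  (Lp.compMeasurePreservingₗᵢ ℝ f hf).toContinuousLinearMap

theorem coeFn_koopman (hf : MeasurePreserving f μ μ) (v : Lp ℝ 2 μ) : koopman hf v =ᵐ[μ] v ∘ f :=
  Lp.coeFn_compMeasurePreserving v hf

theorem koopman_iterate_toLp (hf : MeasurePreserving f μ μ) (hg : MemLp g 2 μ) (n : ℕ) :
    (koopman hf)^[n] (hg.toLp g) = (hg.comp_measurePreserving (hf.iterate n)).toLp (g ∘ f^[n]) := by
  rw [← Lp.toLp_compMeasurePreserving hg (hf.iterate n), ← Lp.compMeasurePreserving_iterate hf]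
  rfl

theorem coeFn_birkhoffAverage_koopman (hf : MeasurePreserving f μ μ) (hg : MemLp g 2 μ) (n : ℕ) :
    (birkhoffAverage ℝ (koopman hf) id n (hg.toLp g) : Lp ℝ 2 μ) =ᵐ[μ] birkhoffAverage ℝ f g n := by
  have hiter : ∀ᵐ x ∂μ, ∀ i, ((koopman hf)^[i] (hg.toLp g) : X → ℝ) x = g (f^[i] x) :=
    ae_all_iff.2 fun i => by
      rw [koopman_iterate_toLp]
      exact MemLp.coeFn_toLp _
  filter_upwards [hiter, Lp.coeFn_smul (n : ℝ)⁻¹ (birkhoffSum (koopman hf) id n (hg.toLp g)),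
    Lp.coeFn_finsetSum (Finset.range n) fun i => (koopman hf)^[i] (hg.toLp g)] with x hx hsmul hsum
  refine hsmul.trans (congrArg ((n : ℝ)⁻¹ • ·) (hsum.trans ?_))
  simp only [Finset.sum_apply, hx, birkhoffSum]

theorem ae_eq_integral_of_koopman_eq [IsProbabilityMeasure μ] (hμ : Ergodic f μ) {v : Lp ℝ 2 μ}
    (hv : koopman hμ.toMeasurePreserving v = v) : v =ᵐ[μ] fun _ => ∫ x, v x ∂μ := by
  have hcomp := (coeFn_koopman hμ.toMeasurePreserving v).symm
  rw [hv] at hcomp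
  obtain ⟨c, hc⟩ := hμ.ae_eq_const_of_ae_eq_comp_ae (Lp.aestronglyMeasurable v) hcomp
  rw [integral_congr_ae hc]
  simpa using! hc

theorem integral_orthogonalProjection_koopman [IsFiniteMeasure μ] (hf : MeasurePreserving f μ μ)
    (v : Lp ℝ 2 μ) :
    ∫ x, (((koopman hf).eqLocus (1 : Lp ℝ 2 μ →L[ℝ] Lp ℝ 2 μ)).orthogonalProjectionOnto v :
      Lp ℝ 2 μ) x ∂μ = ∫ x, v x ∂μ := by
  set F := (koopman hf).eqLocus (1 : Lp ℝ 2 μ →L[ℝ] Lp ℝ 2 μ)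
  have hone : indicatorConstLp 2 .univ (measure_ne_top μ _) (1 : ℝ) ∈ F :=
    Lp.indicatorConstLp_compMeasurePreserving .univ (measure_ne_top μ _) 1 hf
  have hinner := F.inner_orthogonalProjectionOnto_eq_of_mem_left ⟨_, hone⟩ v
  rw [Submodule.coe_inner] at hinner
  simpa only [L2.inner_indicatorConstLp_one, setIntegral_univ] using hinner

theorem tendstoInMeasure_birkhoffAverage [IsProbabilityMeasure μ] (hμ : Ergodic f μ)
    (hg : MemLp g 2 μ) :
    TendstoInMeasure μ (fun n => birkhoffAverage ℝ f g n) atTop fun _ => ∫ x, g x ∂μ := by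
  set hf := hμ.toMeasurePreserving
  set y := ((koopman hf).eqLocus (1 : Lp ℝ 2 μ →L[ℝ] Lp ℝ 2 μ)).orthogonalProjectionOnto (hg.toLp g)
  have hy : (y : Lp ℝ 2 μ) =ᵐ[μ] fun _ => ∫ x, g x ∂μ := by
    rw [← integral_congr_ae hg.coeFn_toLp, ← integral_orthogonalProjection_koopman hf]
    exact ae_eq_integral_of_koopman_eq hμ y.2
  have htend := (koopman hf).tendsto_birkhoffAverage_orthogonalProjection
    (LinearIsometry.norm_toContinuousLinearMap_le _) (hg.toLp g)
  exact ((tendstoInMeasure_of_tendsto_Lp htend).congr_left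
    (coeFn_birkhoffAverage_koopman hf hg)).congr_right hy

theorem tendsto_measureReal_le_birkhoffAverage [IsProbabilityMeasure μ] (hμ : Ergodic f μ)
    (hg : MemLp g 2 μ) {r : ℝ} (hr : ∫ x, g x ∂μ < r) :
    Tendsto (fun n => μ.real {x | r ≤ birkhoffAverage ℝ f g n x}) atTop (𝓝 0) := by
  refine squeeze_zero (fun _ => measureReal_nonneg) (fun n => measureReal_mono fun x hx => ?_)
    (tendstoInMeasure_iff_measureReal_norm.1 (tendstoInMeasure_birkhoffAverage hμ hg) _
      (sub_pos.2 hr))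
  exact (sub_le_sub_right (mem_ofPred.1 hx) _).trans (le_abs_self _)

theorem integral_birkhoffAverage (hf : MeasurePreserving f μ μ) (hg : Integrable g μ) {n : ℕ}
    (hn : n ≠ 0) : ∫ x, birkhoffAverage ℝ f g n x ∂μ = ∫ x, g x ∂μ := by
  have hiter (i : ℕ) : ∫ x, g (f^[i] x) ∂μ = ∫ x, g x ∂μ := by
    have hgm : AEStronglyMeasurable g (μ.map f^[i]) := (hf.iterate i).map_eq.symm ▸ hg.1
    rw [← integral_map (hf.iterate i).aemeasurable hgm, (hf.iterate i).map_eq]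
  simp only [birkhoffAverage, birkhoffSum, smul_eq_mul]
  rw [integral_const_mul,
    integral_finsetSum (f := fun i x => g (f^[i] x)) _
      fun i _ => (hf.iterate i).integrable_comp_of_integrable hg]
  simp [hiter, hn]

theorem mul_measureReal_le_birkhoffAverage_le_integral (hf : MeasurePreserving f μ μ)
    (hg : Integrable g μ) (hg0 : 0 ≤ g) {n : ℕ} (hn : n ≠ 0) (θ : ℝ) :
    θ * μ.real {x | θ ≤ birkhoffAverage ℝ f g n x} ≤ ∫ x, g x ∂μ := by
  have hint : Integrable (birkhoffAverage ℝ f g n) μ :=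
    (integrable_finsetSum _ fun i _ =>
      (hf.iterate i).integrable_comp_of_integrable hg).smul (n : ℝ)⁻¹
  rw [← integral_birkhoffAverage hf hg hn]
  exact mul_meas_ge_le_integral_of_nonneg (.of_forall fun x =>
    smul_nonneg (by positivity) (Finset.sum_nonneg fun i _ => hg0 _)) hint θ

end MeanErgodic

section FiniteDistributions

variable {ι : Type*} {p : ι → ℝ}

theorem negMulLog_le_mul_log_add_inv {x K : ℝ} (hx : 0 ≤ x) (hK : 0 < K) :
    Real.negMulLog x ≤ x * Real.log K + K⁻¹ := by
  have hmul := Real.negMulLog_mul K⁻¹ (K * x)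
  rw [inv_mul_cancel_left₀ hK.ne'] at hmul
  have hbound := Real.negMulLog_le_one_sub_self (mul_nonneg hK.le hx)
  calc Real.negMulLog x = x * Real.log K + K⁻¹ * Real.negMulLog (K * x) := by
        rw [hmul, Real.negMulLog, Real.log_inv]
        field_simp
    _ ≤ x * Real.log K + K⁻¹ * 1 := by
        gcongr
        linarith [mul_nonneg hK.le hx]
    _ = x * Real.log K + K⁻¹ := by rw [mul_one]

theorem sum_negMulLog_le {S : Finset ι} (hp : ∀ i ∈ S, 0 ≤ p i) {K : ℝ} (hK : 0 < K)
    (hSK : (#S : ℝ) ≤ K) :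
    ∑ i ∈ S, Real.negMulLog (p i) ≤ (∑ i ∈ S, p i) * Real.log K + 1 := by
  calc ∑ i ∈ S, Real.negMulLog (p i)
      ≤ ∑ i ∈ S, (p i * Real.log K + K⁻¹) :=
        Finset.sum_le_sum fun i hi => negMulLog_le_mul_log_add_inv (hp i hi) hK
    _ = (∑ i ∈ S, p i) * Real.log K + #S / K := by
        rw [Finset.sum_add_distrib, ← Finset.sum_mul, Finset.sum_const, nsmul_eq_mul,
          div_eq_mul_inv]
    _ ≤ (∑ i ∈ S, p i) * Real.log K + 1 := by
        gcongr
        exact (div_le_one hK).2 hSK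

/-- A Fano-type inequality: the entropy is split over `U`, `W \ U` and `(U ∪ W)ᶜ`. -/
theorem sum_negMulLog_le_of_card_le [Fintype ι] (hp : 0 ≤ p) (hsum : ∑ i, p i = 1)
    {U W : Finset ι} {KU KW : ℝ} (hKU : 0 < KU) (hU : (#U : ℝ) ≤ KU) (hKW : 1 ≤ KW)
    (hW : (#W : ℝ) ≤ KW) :
    ∑ i, Real.negMulLog (p i) ≤ (∑ i ∈ U, p i) * Real.log KU + (1 - ∑ i ∈ U, p i) * Real.log KW +
      (1 - ∑ i ∈ W, p i) * Real.log (Fintype.card ι) + 3 := by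
  classical
  have hsplit (F : ι → ℝ) :
      ∑ i, F i = ∑ i ∈ U, F i + ∑ i ∈ W \ U, F i + ∑ i ∈ (U ∪ W)ᶜ, F i := by
    rw [← Finset.sum_add_sum_compl (U ∪ W), ← Finset.union_sdiff_self_eq_union,
      Finset.sum_union Finset.disjoint_sdiff]
  rcases isEmpty_or_nonempty ι with _ | _
  · simp at hsum
  have hrest : ∑ i ∈ W \ U, p i ≤ 1 - ∑ i ∈ U, p i := by
    linarith [hsplit p, Finset.sum_nonneg fun i (_ : i ∈ (U ∪ W)ᶜ) => hp i]
  have hcompl : ∑ i ∈ (U ∪ W)ᶜ, p i ≤ 1 - ∑ i ∈ W, p i := by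
    rw [← hsum, ← Finset.sum_add_sum_compl (U ∪ W), add_sub_right_comm, le_add_iff_nonneg_left,
      sub_nonneg]
    exact Finset.sum_le_sum_of_subset_of_nonneg Finset.subset_union_right fun i _ _ => hp i
  have hSU := sum_negMulLog_le (fun i _ => hp i) hKU hU
  have hSW := sum_negMulLog_le (S := W \ U) (fun i _ => hp i) (zero_lt_one.trans_le hKW)
    (le_trans (by exact_mod_cast Finset.card_le_card Finset.sdiff_subset) hW)
  have hSc := sum_negMulLog_le (S := (U ∪ W)ᶜ) (fun i _ => hp i)
    (Nat.cast_pos.2 Fintype.card_pos) (by exact_mod_cast Finset.card_le_univ _)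
  calc ∑ i, Real.negMulLog (p i)
      ≤ (∑ i ∈ U, p i) * Real.log KU + (∑ i ∈ W \ U, p i) * Real.log KW +
          (∑ i ∈ (U ∪ W)ᶜ, p i) * Real.log (Fintype.card ι) + 3 := by
        rw [hsplit]
        linarith
    _ ≤ _ := by
        gcongr
        exact Real.log_nonneg hKW

variable [Fintype ι] [DecidableEq ι] {A : Type*} [Fintype A] [DecidableEq A]

theorem sum_exp_neg_hammingDist_le (v : ι → A) (β : ℝ) :
    ∑ w, Real.exp (-(β * hammingDist w v)) ≤
      Real.exp (Fintype.card ι * (Fintype.card A * Real.exp (-β))) := by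
  have hprod (w : ι → A) : Real.exp (-(β * hammingDist w v)) =
      ∏ i, if w i ≠ v i then Real.exp (-β) else 1 := by
    rw [Finset.prod_ite, Finset.prod_const, Finset.prod_const_one, mul_one, ← Real.exp_nat_mul,
      hammingDist]
    ring_nf
  have hfactor (i : ι) : ∑ a, (if a ≠ v i then Real.exp (-β) else 1) ≤
      Real.exp (Fintype.card A * Real.exp (-β)) :=
    calc ∑ a, (if a ≠ v i then Real.exp (-β) else 1)
        ≤ ∑ a, (Real.exp (-β) + if a = v i then 1 else 0) := by
          gcongr with a
          by_cases h : a = v i <;> simp [h, Real.exp_nonneg]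
      _ = Fintype.card A * Real.exp (-β) + 1 := by
          rw [Finset.sum_add_distrib]
          simp
      _ ≤ Real.exp (Fintype.card A * Real.exp (-β)) := Real.add_one_le_exp _
  calc ∑ w, Real.exp (-(β * hammingDist w v))
      = ∏ i, ∑ a, if a ≠ v i then Real.exp (-β) else 1 := by
        simp only [hprod]
        rw [Finset.prod_univ_sum, Fintype.piFinset_univ]
    _ ≤ ∏ _i : ι, Real.exp (Fintype.card A * Real.exp (-β)) :=
        Finset.prod_le_prod (fun i _ => Finset.sum_nonneg fun a _ => by positivity)
          fun i _ => hfactor i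
    _ = Real.exp (Fintype.card ι * (Fintype.card A * Real.exp (-β))) := by
        rw [Finset.prod_const, ← Real.exp_nat_mul, Finset.card_univ]

theorem card_hammingBall_le (v : ι → A) {β : ℝ} (hβ : 0 ≤ β) (ρ : ℝ) :
    (#{w : ι → A | (hammingDist w v : ℝ) ≤ ρ} : ℝ) ≤
      Real.exp (β * ρ + Fintype.card ι * (Fintype.card A * Real.exp (-β))) := by
  have hmul : (#{w : ι → A | (hammingDist w v : ℝ) ≤ ρ} : ℝ) * Real.exp (-(β * ρ)) ≤
      Real.exp (Fintype.card ι * (Fintype.card A * Real.exp (-β))) := by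
    rw [← nsmul_eq_mul]
    refine (Finset.card_nsmul_le_sum _ (fun w => Real.exp (-(β * hammingDist w v))) _
      fun w hw => ?_).trans ?_
    · have := (Finset.mem_filter.1 hw).2
      gcongr
    · exact (Finset.sum_le_univ_sum_of_nonneg fun w => (Real.exp_pos _).le).trans
        (sum_exp_neg_hammingDist_le v β)
  rwa [Real.exp_neg, ← div_eq_mul_inv, div_le_iff₀ (Real.exp_pos _), mul_comm, ← Real.exp_add]
    at hmul

end FiniteDistributions

section Words

variable {X A : Type*}

/-- The word of length `n` recorded along the orbit of `x` by the labelling `l`. -/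
def itinerary (f : X → X) (l : X → A) (n : ℕ) (x : X) : Fin n → A :=
  fun i => l (f^[i] x)

variable [MeasurableSpace X]

/-- The probability that the itinerary of length `n` is the word `w`. -/
def wordProb (μ : Measure X) (f : X → X) (l : X → A) (n : ℕ) (w : Fin n → A) : ℝ :=
  μ.real (itinerary f l n ⁻¹' {w})

/-- The Shannon entropy of the distribution of words of length `n`. -/
def wordEntropy [Fintype A] (μ : Measure X) (f : X → X) (l : X → A) (n : ℕ) : ℝ :=
  ∑ w, Real.negMulLog (wordProb μ f l n w)

/-- The entropy per letter of the process recorded by the labelling `l`. It is encoded as a lower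
limit so as to match `metricEntropy`. -/
def entropyRate [Fintype A] (μ : Measure X) (f : X → X) (l : X → A) : EReal :=
  atTop.liminf fun n : ℕ => ((wordEntropy μ f l n / n : ℝ) : EReal)

/-- The conditional probability of the last letter of a word given the preceding ones. It is `0`
when the preceding letters have probability `0`. -/
def transProb (μ : Measure X) (f : X → X) (l : X → A) (m : ℕ) (u : Fin (m + 1) → A) : ℝ :=
  wordProb μ f l (m + 1) u / wordProb μ f l m (Fin.init u)

/-- The information of the `m`-th letter of the itinerary of a point given the preceding letters. -/
def condInfo (μ : Measure X) (f : X → X) (l : X → A) (m : ℕ) (x : X) : ℝ :=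
  -Real.log (transProb μ f l m (itinerary f l (m + 1) x))

/-- The probability of a word of length `m + n` under the `m`-step Markov approximation of the
process, conditionally on its first `m` letters. -/
def markovWeight (μ : Measure X) (f : X → X) (l : X → A) (m n : ℕ) (w : Fin (m + n) → A) : ℝ :=
  ∏ i : Fin n, transProb μ f l m fun j => w ⟨i + j, by omega⟩

variable {μ : Measure X} {f : X → X} {l : X → A}

theorem wordProb_nonneg (n : ℕ) (w : Fin n → A) : 0 ≤ wordProb μ f l n w :=
  measureReal_nonneg

theorem transProb_nonneg (m : ℕ) (u : Fin (m + 1) → A) : 0 ≤ transProb μ f l m u :=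
  div_nonneg (wordProb_nonneg _ _) (wordProb_nonneg _ _)

theorem markovWeight_nonneg (m n : ℕ) (w : Fin (m + n) → A) : 0 ≤ markovWeight μ f l m n w :=
  Finset.prod_nonneg fun _ _ => transProb_nonneg _ _

theorem markovWeight_itinerary (m n : ℕ) (x : X) :
    markovWeight μ f l m n (itinerary f l (m + n) x) =
      ∏ i : Fin n, transProb μ f l m (itinerary f l (m + 1) (f^[i] x)) := by
  refine Finset.prod_congr rfl fun i _ => congrArg _ (funext fun j => ?_)
  simp only [itinerary]
  rw [← Function.iterate_add_apply, add_comm (i : ℕ)]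

theorem markovWeight_snoc (m n : ℕ) (v : Fin (m + n) → A) (a : A) :
    markovWeight μ f l m (n + 1) (Fin.snoc v a : Fin (m + n + 1) → A) =
      markovWeight μ f l m n v *
        transProb μ f l m (Fin.snoc (fun j : Fin m => v ⟨n + j, by omega⟩) a) := by
  rw [markovWeight, Fin.prod_univ_castSucc]
  refine congrArg₂ _ (Finset.prod_congr rfl fun i _ => congrArg _ (funext fun j => ?_))
    (congrArg _ (funext fun j => ?_))
  · exact Fin.snoc_castSucc (α := fun _ => A) (n := m + n) a v ⟨i + j, by omega⟩
  · induction j using Fin.lastCases with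
    | last =>
      rw [Fin.snoc_last]
      convert Fin.snoc_last (α := fun _ => A) (n := m + n) a v using 2
      ext
      simp [add_comm]
    | cast j =>
      rw [Fin.snoc_castSucc]
      exact Fin.snoc_castSucc (α := fun _ => A) (n := m + n) a v ⟨n + j, by omega⟩

theorem sum_snoc [Fintype A] {n : ℕ} (F : (Fin (n + 1) → A) → ℝ) :
    ∑ w, F w = ∑ v : Fin n → A, ∑ a, F (Fin.snoc v a) := by
  rw [← (Fin.snocEquiv fun _ => A).sum_comp, Fintype.sum_prod_type_right]
  rfl

theorem measurable_itinerary [MeasurableSpace A] (hf : Measurable f) (hl : Measurable l) (n : ℕ) :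
    Measurable (itinerary f l n) :=
  measurable_pi_lambda _ fun i => hl.comp (hf.iterate i)

section FiniteMeasure

variable [IsFiniteMeasure μ]

theorem wordProb_le_init (n : ℕ) (u : Fin (n + 1) → A) :
    wordProb μ f l (n + 1) u ≤ wordProb μ f l n (Fin.init u) := by
  refine measureReal_mono ?_
  rintro x rfl
  rfl

theorem wordProb_mul_neg_log_transProb (m : ℕ) (u : Fin (m + 1) → A) :
    wordProb μ f l (m + 1) u * -Real.log (transProb μ f l m u) =
      Real.negMulLog (wordProb μ f l (m + 1) u) +
        wordProb μ f l (m + 1) u * Real.log (wordProb μ f l m (Fin.init u)) := by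
  rcases (wordProb_nonneg (μ := μ) (f := f) (l := l) (m + 1) u).eq_or_lt with h | h
  · simp [← h]
  · rw [transProb, Real.log_div h.ne' (h.trans_le (wordProb_le_init m u)).ne', Real.negMulLog]
    ring

theorem ae_wordProb_itinerary_pos [Countable A] (n : ℕ) :
    ∀ᵐ x ∂μ, 0 < wordProb μ f l n (itinerary f l n x) := by
  have hnull (w : Fin n → A) : ∀ᵐ x ∂μ, itinerary f l n x = w → 0 < wordProb μ f l n w := by
    rcases (wordProb_nonneg (μ := μ) (f := f) (l := l) n w).eq_or_lt with h | h
    · have h0 := (measureReal_eq_zero_iff (by finiteness)).1 h.symm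
      filter_upwards [measure_eq_zero_iff_ae_notMem.1 h0] with x hx
      exact fun hxw => (hx hxw).elim
    · exact .of_forall fun _ _ => h
  filter_upwards [ae_all_iff.2 hnull] with x hx
  exact hx _ rfl

theorem ae_transProb_itinerary_pos [Countable A] (m : ℕ) :
    ∀ᵐ x ∂μ, 0 < transProb μ f l m (itinerary f l (m + 1) x) := by
  filter_upwards [ae_wordProb_itinerary_pos (l := l) (m + 1)] with x hx
  exact div_pos hx (hx.trans_le (wordProb_le_init m _))

theorem ae_markovWeight_itinerary_eq_exp [Countable A] (hf : MeasurePreserving f μ μ)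
    (m n : ℕ) : ∀ᵐ x ∂μ, markovWeight μ f l m n (itinerary f l (m + n) x) =
      Real.exp (-birkhoffSum f (condInfo μ f l m) n x) := by
  have hpos : ∀ᵐ x ∂μ, ∀ i : ℕ, 0 < transProb μ f l m (itinerary f l (m + 1) (f^[i] x)) :=
    ae_all_iff.2 fun i => (hf.iterate i).quasiMeasurePreserving.ae
      (ae_transProb_itinerary_pos m)
  filter_upwards [hpos] with x hx
  simp only [markovWeight_itinerary, birkhoffSum, condInfo]
  rw [Finset.sum_neg_distrib, neg_neg, Real.exp_sum, Finset.prod_range]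
  exact Finset.prod_congr rfl fun i _ => (Real.exp_log (hx i)).symm

section Measurable

variable [MeasurableSpace A] [MeasurableSingletonClass A]

theorem sum_wordProb (hf : Measurable f) (hl : Measurable l) (n : ℕ) (S : Finset (Fin n → A)) :
    ∑ w ∈ S, wordProb μ f l n w = μ.real (itinerary f l n ⁻¹' S) :=
  sum_measureReal_preimage_singleton S
    fun w _ => measurable_itinerary hf hl n (measurableSet_singleton w)

theorem memLp_condInfo [Finite A] (hf : Measurable f) (hl : Measurable l) (m : ℕ) :
    MemLp (condInfo μ f l m) 2 μ := by
  have hmeas : Measurable (condInfo μ f l m) :=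
    (measurable_of_finite fun u => -Real.log (transProb μ f l m u)).comp
      (measurable_itinerary hf hl (m + 1))
  obtain ⟨C, hC⟩ := (finite_range fun u => ‖-Real.log (transProb μ f l m u)‖).bddAbove
  exact .of_bound hmeas.aestronglyMeasurable C
    (.of_forall fun x => hC ⟨itinerary f l (m + 1) x, rfl⟩)

variable [Fintype A]

theorem sum_wordProb_snoc (hf : Measurable f) (hl : Measurable l) (n : ℕ) (v : Fin n → A) :
    ∑ a, wordProb μ f l (n + 1) (Fin.snoc v a) = wordProb μ f l n v := by
  classical
  have hinj : Function.Injective fun a : A => (Fin.snoc v a : Fin (n + 1) → A) :=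
    Function.Injective2.right (Fin.snoc_injective2 (α := fun _ => A)) v
  rw [← Finset.sum_image (f := wordProb μ f l (n + 1)) hinj.injOn, sum_wordProb hf hl]
  refine congrArg μ.real (ext fun x => ?_)
  simp only [mem_preimage, Finset.coe_image, Finset.coe_univ, image_univ, mem_range,
    mem_singleton_iff]
  constructor
  · rintro ⟨a, ha⟩
    exact (congrArg Fin.init ha).symm.trans (Fin.init_snoc (α := fun _ => A) a v)
  · rintro rfl
    exact ⟨_, Fin.snoc_init_self (itinerary f l (n + 1) x)⟩

theorem sum_transProb_snoc_le (hf : Measurable f) (hl : Measurable l) (m : ℕ) (v : Fin m → A) :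
    ∑ a, transProb μ f l m (Fin.snoc v a) ≤ 1 := by
  simp only [transProb, Fin.init_snoc]
  rw [← Finset.sum_div, sum_wordProb_snoc hf hl]
  exact div_self_le_one _

theorem sum_markovWeight_le (hf : Measurable f) (hl : Measurable l) (m n : ℕ) :
    ∑ w, markovWeight μ f l m n w ≤ (Fintype.card A : ℝ) ^ m := by
  induction n with
  | zero => simp [markovWeight]
  | succ n ih =>
    refine le_trans ?_ ih
    change ∑ w : Fin (m + n + 1) → A, markovWeight μ f l m (n + 1) w ≤ _
    rw [sum_snoc (n := m + n)]
    refine Finset.sum_le_sum fun v _ => ?_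
    simp only [markovWeight_snoc]
    rw [← Finset.mul_sum]
    exact mul_le_of_le_one_right (markovWeight_nonneg _ _ _) (sum_transProb_snoc_le hf hl _ _)

theorem card_exp_neg_le_markovWeight_le (hf : Measurable f) (hl : Measurable l) (m n : ℕ) (t : ℝ) :
    (#{w | Real.exp (-t) ≤ markovWeight μ f l m n w} : ℝ) ≤
      (Fintype.card A : ℝ) ^ m * Real.exp t := by
  rw [← div_le_iff₀ (Real.exp_pos t), div_eq_mul_inv, ← Real.exp_neg, ← nsmul_eq_mul]
  calc _ ≤ ∑ w with Real.exp (-t) ≤ markovWeight μ f l m n w, markovWeight μ f l m n w :=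
        Finset.card_nsmul_le_sum _ _ _ fun w hw => (Finset.mem_filter.1 hw).2
    _ ≤ ∑ w, markovWeight μ f l m n w :=
        Finset.sum_le_univ_sum_of_nonneg fun w => markovWeight_nonneg _ _ _
    _ ≤ _ := sum_markovWeight_le hf hl m n

theorem integral_itinerary (hf : Measurable f) (hl : Measurable l) (n : ℕ)
    (F : (Fin n → A) → ℝ) :
    ∫ x, F (itinerary f l n x) ∂μ = ∑ w, wordProb μ f l n w * F w := by
  have hm := measurable_itinerary hf hl n
  rw [← integral_map hm.aemeasurable (measurable_of_finite F).aestronglyMeasurable,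
    integral_fintype .of_finite]
  refine Finset.sum_congr rfl fun w _ => ?_
  rw [map_measureReal_apply hm (measurableSet_singleton w)]
  rfl

theorem integral_condInfo (hf : Measurable f) (hl : Measurable l) (m : ℕ) :
    ∫ x, condInfo μ f l m x ∂μ = wordEntropy μ f l (m + 1) - wordEntropy μ f l m := by
  have hprefix : ∑ u, wordProb μ f l (m + 1) u * Real.log (wordProb μ f l m (Fin.init u)) =
      -wordEntropy μ f l m := by
    rw [sum_snoc, wordEntropy, ← Finset.sum_neg_distrib]
    refine Finset.sum_congr rfl fun v _ => ?_
    simp only [Fin.init_snoc]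
    rw [← Finset.sum_mul, sum_wordProb_snoc hf hl, Real.negMulLog]
    ring
  calc ∫ x, condInfo μ f l m x ∂μ
      = ∑ u, wordProb μ f l (m + 1) u * -Real.log (transProb μ f l m u) :=
        integral_itinerary hf hl (m + 1) fun u => -Real.log (transProb μ f l m u)
    _ = _ := by
        simp only [wordProb_mul_neg_log_transProb]
        rw [Finset.sum_add_distrib, hprefix]
        rfl

end Measurable

end FiniteMeasure

open Classical in
/-- The words of length `n` that start a word of length `m + n` whose weight under the `m`-step
Markov approximation is at least `exp (-(n * r))`. -/
def typicalWords [Fintype A] (μ : Measure X) (f : X → X) (l : X → A) (m : ℕ) (r : ℝ) (n : ℕ) :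
    Finset (Fin n → A) :=
  ({w | Real.exp (-(n * r)) ≤ markovWeight μ f l m n w} : Finset (Fin (m + n) → A)).image
    fun w i => w ⟨i, by omega⟩

variable [IsProbabilityMeasure μ] [Fintype A]

theorem ae_itinerary_mem_typicalWords (hf : MeasurePreserving f μ μ) (m : ℕ) (r : ℝ) (n : ℕ) :
    ∀ᵐ x ∂μ, birkhoffSum f (condInfo μ f l m) n x ≤ n * r →
      itinerary f l n x ∈ typicalWords μ f l m r n := by
  classical
  filter_upwards [ae_markovWeight_itinerary_eq_exp (l := l) hf m n] with x hx hle
  refine Finset.mem_image.2 ⟨itinerary f l (m + n) x, ?_, rfl⟩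
  rw [Finset.mem_filter, hx, Real.exp_le_exp, neg_le_neg_iff]
  exact ⟨Finset.mem_univ _, hle⟩

section Measurable

variable [MeasurableSpace A] [MeasurableSingletonClass A]

theorem card_typicalWords_le (hf : Measurable f) (hl : Measurable l) (m : ℕ) (r : ℝ) (n : ℕ) :
    (#(typicalWords μ f l m r n) : ℝ) ≤ (Fintype.card A : ℝ) ^ m * Real.exp (n * r) := by
  classical
  refine le_trans ?_ (card_exp_neg_le_markovWeight_le (μ := μ) hf hl m n (n * r))
  exact Nat.cast_le.2 Finset.card_image_le

theorem tendsto_measureReal_typicalWords (hμ : Ergodic f μ) (hl : Measurable l) {m : ℕ} {r : ℝ}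
    (hr : wordEntropy μ f l (m + 1) - wordEntropy μ f l m < r) :
    Tendsto (fun n => μ.real (itinerary f l n ⁻¹' typicalWords μ f l m r n)) atTop (𝓝 1) := by
  have hatypical := tendsto_measureReal_le_birkhoffAverage hμ
    (memLp_condInfo hμ.measurable hl m) ((integral_condInfo hμ.measurable hl m).trans_lt hr)
  have hlower : Tendsto
      (fun n => 1 - μ.real {x | r ≤ birkhoffAverage ℝ f (condInfo μ f l m) n x}) atTop (𝓝 1) := by
    simpa using hatypical.const_sub 1
  refine tendsto_of_tendsto_of_tendsto_of_le_of_le' hlower tendsto_const_nhds ?_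
    (.of_forall fun n => measureReal_le_one)
  filter_upwards [eventually_ne_atTop 0] with n hn
  rw [sub_le_iff_le_add, ← probReal_univ (μ := μ)]
  refine le_trans (ENNReal.toReal_mono (measure_ne_top _ _) (measure_mono_ae ?_))
    (measureReal_union_le _ _)
  filter_upwards [ae_itinerary_mem_typicalWords (l := l) hμ.toMeasurePreserving m r n] with x hx
  intro _
  exact (le_total _ _).imp hx (le_inv_mul_iff₀ (by positivity)).2

end Measurable

theorem wordEntropy_zero : wordEntropy μ f l 0 = 0 := by
  have h : itinerary f l 0 ⁻¹' {default} = univ :=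
    eq_univ_of_forall fun _ => Subsingleton.elim _ _
  simp [wordEntropy, wordProb, h]

theorem wordEntropy_nonneg (n : ℕ) : 0 ≤ wordEntropy μ f l n :=
  Finset.sum_nonneg fun _ _ => Real.negMulLog_nonneg measureReal_nonneg measureReal_le_one

theorem exists_wordEntropy_succ_sub_lt {r : ℝ} (h : entropyRate μ f l < r) :
    ∃ m, wordEntropy μ f l (m + 1) - wordEntropy μ f l m < r := by
  by_contra! hstep
  have hlin (n : ℕ) : n * r ≤ wordEntropy μ f l n := by
    induction n with
    | zero => simp [wordEntropy_zero]
    | succ n ih =>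
      push_cast
      linarith [hstep n]
  refine h.not_ge (le_liminf_of_le (h := ?_))
  filter_upwards [eventually_gt_atTop 0] with n hn
  rw [EReal.coe_le_coe_iff, le_div_iff₀ (by positivity), mul_comm]
  exact hlin n

theorem entropyRate_nonneg : 0 ≤ entropyRate μ f l :=
  le_liminf_of_le (h := .of_forall fun n => by
    exact_mod_cast div_nonneg (wordEntropy_nonneg n) n.cast_nonneg)

variable [MeasurableSpace A] [MeasurableSingletonClass A]

theorem sum_univ_wordProb (hf : Measurable f) (hl : Measurable l) (n : ℕ) :
    ∑ w, wordProb μ f l n w = 1 := by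
  rw [sum_wordProb hf hl]
  simp

theorem wordEntropy_le (hf : Measurable f) (hl : Measurable l) (n : ℕ) :
    wordEntropy μ f l n ≤ n * Real.log (Fintype.card A) + 1 := by
  obtain ⟨x⟩ := nonempty_of_isProbabilityMeasure μ
  have : Nonempty A := ⟨l x⟩
  have h := sum_negMulLog_le (S := Finset.univ)
    (fun w _ => wordProb_nonneg (μ := μ) (f := f) (l := l) n w)
    (K := (Fintype.card A : ℝ) ^ n) (by have := Fintype.card_pos (α := A); positivity) (by simp)
  rwa [sum_univ_wordProb hf hl, one_mul, Real.log_pow] at h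

theorem entropyRate_ne_top (hf : Measurable f) (hl : Measurable l) : entropyRate μ f l ≠ ⊤ := by
  refine (lt_of_le_of_lt ?_ (EReal.coe_lt_top (Real.log (Fintype.card A) + 1))).ne
  refine liminf_le_of_le (h := fun b hb => ?_)
  obtain ⟨n, hbn, hn⟩ := (hb.and (eventually_ge_atTop 1)).exists
  refine hbn.trans (EReal.coe_le_coe_iff.2 ?_)
  have hn' : (1 : ℝ) ≤ n := by exact_mod_cast hn
  rw [div_le_iff₀ (by positivity)]
  linarith [wordEntropy_le (μ := μ) hf hl n]

theorem exists_typical_words (hμ : Ergodic f μ) (hl : Measurable l) {r : ℝ}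
    (hr : entropyRate μ f l < r) :
    ∃ W : ∀ n, Finset (Fin n → A), (∀ᶠ n : ℕ in atTop, (#(W n) : ℝ) ≤ Real.exp (n * r)) ∧
      Tendsto (fun n => μ.real (itinerary f l n ⁻¹' W n)) atTop (𝓝 1) := by
  obtain ⟨s, hs, hsr⟩ := EReal.lt_iff_exists_real_btwn.1 hr
  rw [EReal.coe_lt_coe_iff, ← sub_pos] at hsr
  obtain ⟨m, hm⟩ := exists_wordEntropy_succ_sub_lt hs
  refine ⟨typicalWords μ f l m s, ?_, tendsto_measureReal_typicalWords hμ hl hm⟩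
  have hgrowth : Tendsto (fun n : ℕ => Real.exp (n * (r - s))) atTop atTop :=
    Real.tendsto_exp_atTop.comp (tendsto_natCast_atTop_atTop.atTop_mul_const hsr)
  filter_upwards [hgrowth.eventually_ge_atTop ((Fintype.card A : ℝ) ^ m)] with n hn
  calc (#(typicalWords μ f l m s n) : ℝ)
      ≤ (Fintype.card A : ℝ) ^ m * Real.exp (n * s) := card_typicalWords_le hμ.measurable hl m s n
    _ ≤ Real.exp (n * (r - s)) * Real.exp (n * s) := by gcongr
    _ = Real.exp (n * r) := by rw [← Real.exp_add]; ring_nf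

theorem wordEntropy_div_le_of_card_le_exp (hf : Measurable f) (hl : Measurable l) {n : ℕ}
    (hn : n ≠ 0) {U W : Finset (Fin n → A)} {r s : ℝ} (hU : (#U : ℝ) ≤ Real.exp (n * r))
    (hs : 0 ≤ s) (hW : (#W : ℝ) ≤ Real.exp (n * s)) :
    wordEntropy μ f l n / n ≤ μ.real (itinerary f l n ⁻¹' U) * r +
      (1 - μ.real (itinerary f l n ⁻¹' U)) * s +
      (1 - μ.real (itinerary f l n ⁻¹' W)) * Real.log (Fintype.card A) + 3 / n := by
  have hfano := sum_negMulLog_le_of_card_le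
    (fun w => wordProb_nonneg (μ := μ) (f := f) (l := l) n w) (sum_univ_wordProb hf hl n)
    (Real.exp_pos _) hU (Real.one_le_exp (by positivity)) hW
  simp only [sum_wordProb hf hl, Real.log_exp, Fintype.card_fun, Fintype.card_fin, Nat.cast_pow,
    Real.log_pow] at hfano
  rw [div_le_iff₀ (by positivity), add_mul, div_mul_cancel₀ _ (by positivity)]
  refine hfano.trans_eq ?_
  ring

theorem eventually_exp_le_card_of_le_measureReal (hμ : Ergodic f μ) (hl : Measurable l) {r c : ℝ}
    (hr : r < entropyRate μ f l) (hc : 0 < c) :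
    ∀ᶠ n : ℕ in atTop, ∀ U : Finset (Fin n → A), c ≤ μ.real (itinerary f l n ⁻¹' U) →
      Real.exp (n * r) ≤ #U := by
  obtain ⟨h, hh⟩ : ∃ h : ℝ, entropyRate μ f l = h :=
    ⟨_, (EReal.coe_toReal (entropyRate_ne_top hμ.measurable hl) (ne_bot_of_gt hr)).symm⟩
  have h0 : 0 ≤ h := EReal.coe_nonneg.1 (hh ▸ entropyRate_nonneg)
  have hrh : 0 < h - r := sub_pos.2 (EReal.coe_lt_coe_iff.1 (hh ▸ hr))
  set δ := c * (h - r) / 4 with hδ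
  have hδ0 : 0 < δ := by positivity
  obtain ⟨W, hWcard, hW⟩ := exists_typical_words hμ hl (r := h + δ)
    (hh.trans_lt (EReal.coe_lt_coe_iff.2 (lt_add_of_pos_right h hδ0)))
  have hentropy : ∀ᶠ n : ℕ in atTop, h - δ < wordEntropy μ f l n / n :=
    (eventually_lt_of_lt_liminf (lt_of_lt_of_eq (EReal.coe_lt_coe_iff.2 (sub_lt_self h hδ0))
      hh.symm)).mono fun n hn => EReal.coe_lt_coe_iff.1 hn
  have hrest : Tendsto (fun n => (1 - μ.real (itinerary f l n ⁻¹' W n)) *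
      Real.log (Fintype.card A)) atTop (𝓝 0) := by
    simpa using (hW.const_sub 1).mul_const (Real.log (Fintype.card A))
  filter_upwards [hWcard, hentropy, hrest.eventually_le_const hδ0,
    (tendsto_const_div_atTop_nhds_zero_nat 3).eventually_le_const hδ0, eventually_ne_atTop 0]
    with n hWn hHn hrestn hn3 hn U hcU
  by_contra! hU
  have hfano := wordEntropy_div_le_of_card_le_exp (μ := μ) hμ.measurable hl hn hU.le
    (add_nonneg h0 hδ0.le) hWn
  have hmass := mul_le_mul_of_nonneg_right hcU hrh.le
  have hmassδ := mul_nonneg (hc.le.trans hcU) hδ0.le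
  linarith

end Words

section Partitions

variable {X : Type*} [MeasurableSpace X]

theorem isFinMeasPartition_fibers {A : Type*} [Finite A] [MeasurableSpace A]
    [MeasurableSingletonClass A] {g : X → A} (hg : Measurable g) :
    IsFinMeasPartition (finite_range fun a => g ⁻¹' {a}).toFinset := by
  simp only [IsFinMeasPartition, Finite.mem_toFinset, Finite.coe_toFinset]
  refine ⟨forall_mem_range.2 fun a => hg (measurableSet_singleton a),
    eq_univ_of_forall fun x => ⟨_, mem_range_self (g x), rfl⟩, ?_⟩
  rintro _ ⟨a, rfl⟩ _ ⟨b, rfl⟩ hab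
  exact (disjoint_singleton.2 fun h => hab (by rw [h])).preimage g

namespace IsFinMeasPartition

variable {P : Finset (Set X)}

theorem exists_mem (hP : IsFinMeasPartition P) (x : X) : ∃ C : {C // C ∈ P}, x ∈ C.1 := by
  obtain ⟨C, hC, hx⟩ := mem_sUnion.1 (hP.2.1 ▸ mem_univ x)
  exact ⟨⟨C, hC⟩, hx⟩

/-- The labelling of the points of the space by the cells of the partition. The cells are numbered,
so that the set of labels is a discrete measurable space. -/
def label (hP : IsFinMeasPartition P) (x : X) : Fin #P :=
  P.equivFin (hP.exists_mem x).choose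

variable (hP : IsFinMeasPartition P)

theorem preimage_label (C : {C // C ∈ P}) : hP.label ⁻¹' {P.equivFin C} = C := by
  ext x
  have hx := (hP.exists_mem x).choose_spec
  rw [mem_preimage, mem_singleton_iff, label, P.equivFin.apply_eq_iff_eq]
  refine ⟨fun h => h ▸ hx, fun hxC => ?_⟩
  by_contra hne
  exact disjoint_left.1 (hP.2.2 (Subtype.prop _) C.2 fun h => hne (Subtype.ext h)) hx hxC

theorem measurable_label : Measurable hP.label := by
  refine measurable_to_countable' fun i => ?_
  obtain ⟨C, rfl⟩ := P.equivFin.surjective i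
  exact hP.preimage_label C ▸ hP.1 C C.2

theorem exists_mem_of_label_eq {x y : X} (h : hP.label x = hP.label y) :
    ∃ C ∈ P, x ∈ C ∧ y ∈ C :=
  ⟨_, Subtype.prop _, (hP.exists_mem x).choose_spec,
    P.equivFin.injective h ▸ (hP.exists_mem y).choose_spec⟩

theorem partitionDynH_eq_wordEntropy (μ : Measure X) (f : X → X) (n : ℕ) :
    partitionDynH μ f P n = wordEntropy μ f hP.label n := by
  refine Fintype.sum_equiv ((Equiv.refl _).arrowCongr P.equivFin) _ _ fun ω => congrArg _ ?_
  rw [wordProb, measureReal_def]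
  refine congrArg (fun s => (μ s).toReal) (ext fun x => ?_)
  simp only [← hP.preimage_label, mem_iInter, mem_preimage, mem_singleton_iff, funext_iff]
  rfl

end IsFinMeasPartition

theorem exists_isFinMeasPartition_label_dist_lt [PseudoMetricSpace X] [OpensMeasurableSpace X]
    (hX : TotallyBounded (univ : Set X)) {ε : ℝ} (hε : 0 < ε) :
    ∃ (P : Finset (Set X)) (hP : IsFinMeasPartition P),
      ∀ x y, hP.label x = hP.label y → dist x y < ε := by
  obtain ⟨t, ht, hcover⟩ := Metric.totallyBounded_iff.1 hX (ε / 2) (half_pos hε)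
  have := ht.to_subtype
  have hg : Measurable fun (x : X) (c : t) => x ∈ Metric.ball (c : X) (ε / 2) :=
    measurable_pi_lambda _ fun c => measurableSet_setOfPred.1 Metric.isOpen_ball.measurableSet
  refine ⟨_, isFinMeasPartition_fibers hg, fun x y hxy => ?_⟩
  obtain ⟨C, hC, hx, hy⟩ := IsFinMeasPartition.exists_mem_of_label_eq _ hxy
  obtain ⟨a, rfl⟩ := (Finite.mem_toFinset _).1 hC
  obtain ⟨c, hc, hxc⟩ := mem_iUnion₂.1 (hcover (mem_univ x))
  have hyc : y ∈ Metric.ball c (ε / 2) := (congrFun (Eq.trans hx hy.symm) ⟨c, hc⟩).mp hxc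
  linarith [dist_triangle_right x y c, Metric.mem_ball.1 hxc, Metric.mem_ball.1 hyc]

theorem metricEntropy_eq_iSup_entropyRate (μ : Measure X) (f : X → X) :
    metricEntropy μ f = ⨆ P : {P : Finset (Set X) // IsFinMeasPartition P},
      entropyRate μ f P.2.label :=
  iSup_congr fun P => by simp only [P.2.partitionDynH_eq_wordEntropy, entropyRate]

theorem entropyRate_label_le_metricEntropy {P : Finset (Set X)} (hP : IsFinMeasPartition P)
    (μ : Measure X) (f : X → X) : entropyRate μ f hP.label ≤ metricEntropy μ f := by
  rw [metricEntropy_eq_iSup_entropyRate]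
  exact le_iSup (fun P : {P : Finset (Set X) // IsFinMeasPartition P} =>
    entropyRate μ f P.2.label) ⟨P, hP⟩

end Partitions

section BowenCovers

variable {X A : Type*} [PseudoMetricSpace X] {f : X → X} {l : X → A} {n : ℕ} {ε γ : ℝ}

theorem exists_finset_preimage_itinerary_subset (hl : ∀ x y, l x = l y → dist x y < ε)
    (W : Finset (Fin n → A)) :
    ∃ S : Finset X, #S ≤ #W ∧ itinerary f l n ⁻¹' W ⊆ ⋃ x ∈ S, bowenBall f n ε x := by
  classical
  rcases isEmpty_or_nonempty X with _ | _
  · exact ⟨∅, by simp, fun x => isEmptyElim x⟩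
  refine ⟨W.image (Function.invFun (itinerary f l n)), Finset.card_image_le, fun x hx =>
    mem_iUnion₂.2 ⟨_, Finset.mem_image_of_mem _ hx, fun i hi => hl _ _ ?_⟩⟩
  exact congrFun (Function.invFun_eq ⟨x, rfl⟩ : itinerary f l n _ = itinerary f l n x) ⟨i, hi⟩

variable [MeasurableSpace X] {μ : Measure X}

theorem katokCoverNum_le_card (hl : ∀ x y, l x = l y → dist x y < ε) {W : Finset (Fin n → A)}
    (hW : 1 - γ ≤ μ.real (itinerary f l n ⁻¹' W)) : katokCoverNum μ f n ε γ ≤ #W := by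
  obtain ⟨S, hSW, hS⟩ := exists_finset_preimage_itinerary_subset hl W
  refine (Nat.sInf_le ?_).trans hSW
  exact ⟨S, rfl, (ENNReal.ofReal_le_of_le_toReal hW).trans (measure_mono hS)⟩

variable [IsProbabilityMeasure μ] [OpensMeasurableSpace X]

theorem exists_finset_card_eq_katokCoverNum (hX : TotallyBounded (univ : Set X)) (hε : 0 < ε)
    (hγ : 0 ≤ γ) :
    ∃ S : Finset X, #S = katokCoverNum μ f n ε γ ∧
      1 - γ ≤ μ.real (⋃ x ∈ S, bowenBall f n ε x) := by
  obtain ⟨P, hP, hPε⟩ := exists_isFinMeasPartition_label_dist_lt hX hε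
  obtain ⟨S, -, hS⟩ := exists_finset_preimage_itinerary_subset (f := f) (n := n) hPε
    Finset.univ
  rw [Finset.coe_univ, preimage_univ, univ_subset_iff] at hS
  obtain ⟨T, hT, hTμ⟩ := Nat.sInf_mem (s := {k : ℕ | ∃ S : Finset X, #S = k ∧
    ENNReal.ofReal (1 - γ) ≤ μ (⋃ x ∈ S, bowenBall f n ε x)})
    ⟨_, S, rfl, by rw [hS, measure_univ, ENNReal.ofReal_le_one]; linarith⟩
  exact ⟨T, hT, (ENNReal.ofReal_le_iff_le_toReal (measure_ne_top _ _)).1 hTμ⟩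

theorem katokCoverNum_pos (hX : TotallyBounded (univ : Set X)) (hε : 0 < ε)
    (hγ : γ ∈ Ioo (0 : ℝ) 1) :
    0 < katokCoverNum μ f n ε γ := by
  obtain ⟨S, hS, hSμ⟩ := exists_finset_card_eq_katokCoverNum (μ := μ) (f := f) (n := n) hX
    hε hγ.1.le
  rw [← hS, Finset.card_pos, Finset.nonempty_iff_ne_empty]
  rintro rfl
  simp only [Finset.notMem_empty, iUnion_of_empty, iUnion_empty, measureReal_empty] at hSμ
  linarith [hγ.2]

theorem limsup_katokCoverNum_le_metricEntropy (hX : TotallyBounded (univ : Set X))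
    (hμ : Ergodic f μ) (hε : 0 < ε) (hγ : γ ∈ Ioo (0 : ℝ) 1) :
    atTop.limsup (fun n : ℕ => ((Real.log (katokCoverNum μ f n ε γ) / n : ℝ) : EReal)) ≤
      metricEntropy μ f := by
  obtain ⟨P, hP, hPε⟩ := exists_isFinMeasPartition_label_dist_lt hX hε
  refine (EReal.le_of_forall_lt_iff_le.1 fun r hr => ?_).trans
    (entropyRate_label_le_metricEntropy hP μ f)
  obtain ⟨W, hWcard, hW⟩ := exists_typical_words hμ hP.measurable_label hr
  refine limsup_le_of_le (h := ?_)
  filter_upwards [hWcard, hW.eventually_const_le (sub_lt_self 1 hγ.1), eventually_gt_atTop 0]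
    with n hWn hWμ hn
  have hN : (0 : ℝ) < katokCoverNum μ f n ε γ := Nat.cast_pos.2 (katokCoverNum_pos hX hε hγ)
  rw [EReal.coe_le_coe_iff, div_le_iff₀ (by positivity), mul_comm, Real.log_le_iff_le_exp hN]
  exact (Nat.cast_le.2 (katokCoverNum_le_card hPε hWμ)).trans hWn

end BowenCovers

section LowerBound

variable {X A : Type*} [PseudoMetricSpace X] {f : X → X} {l : X → A} {B : Set X} {n : ℕ}
  {ε δ γ : ℝ}

theorem exists_word_hammingDist_le [DecidableEq A]
    (hB : ∀ x ∉ B, ∀ y ∉ B, dist x y < δ → l x = l y) (hεδ : 2 * ε ≤ δ) (x : X) :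
    ∃ v : Fin n → A, ∀ y ∈ bowenBall f n ε x,
      (hammingDist (itinerary f l n y) v : ℝ) ≤ birkhoffSum f (B.indicator 1) n y := by
  classical
  have hletter (i : Fin n) : ∃ a, ∀ y ∈ bowenBall f n ε x, f^[i] y ∉ B → l (f^[i] y) = a := by
    by_cases h : ∃ z ∈ bowenBall f n ε x, f^[i] z ∉ B
    · obtain ⟨z, hz, hzB⟩ := h
      refine ⟨l (f^[i] z), fun y hy hyB => hB _ hyB _ hzB ?_⟩
      linarith [hy i i.2, hz i i.2, dist_triangle_left (f^[i] y) (f^[i] z) (f^[i] x)]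
    · push Not at h
      exact ⟨l x, fun y hy hyB => (hyB (h y hy)).elim⟩
  choose v hv using hletter
  refine ⟨v, fun y hy => ?_⟩
  rw [hammingDist, Finset.card_filter, Nat.cast_sum, birkhoffSum, Finset.sum_range]
  refine Finset.sum_le_sum fun i _ => ?_
  by_cases hyB : f^[i] y ∈ B
  · rw [indicator_of_mem hyB]
    split_ifs <;> simp
  · simp [itinerary, hyB, hv i y hy hyB]

theorem exists_words_of_iUnion_bowenBall [Fintype A] {β θ : ℝ}
    (hB : ∀ x ∉ B, ∀ y ∉ B, dist x y < δ → l x = l y) (hεδ : 2 * ε ≤ δ) (hβ : 0 ≤ β)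
    (hn : n ≠ 0) (S : Finset X) :
    ∃ U : Finset (Fin n → A),
      (#U : ℝ) ≤ #S * Real.exp (n * (β * θ + Fintype.card A * Real.exp (-β))) ∧
      ⋃ x ∈ S, bowenBall f n ε x ⊆
        itinerary f l n ⁻¹' U ∪ {y | θ ≤ birkhoffAverage ℝ f (B.indicator 1) n y} := by
  classical
  choose v hv using exists_word_hammingDist_le (f := f) (n := n) hB hεδ
  refine ⟨S.biUnion fun x => {w | (hammingDist w (v x) : ℝ) ≤ θ * n}, ?_, ?_⟩
  · calc _ ≤ ∑ x ∈ S, (#{w | (hammingDist w (v x) : ℝ) ≤ θ * n} : ℝ) :=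
          mod_cast Finset.card_biUnion_le
      _ ≤ ∑ _x ∈ S, Real.exp (n * (β * θ + Fintype.card A * Real.exp (-β))) := by
          refine Finset.sum_le_sum fun x _ => (card_hammingBall_le (v x) hβ _).trans_eq ?_
          rw [Fintype.card_fin]
          ring_nf
      _ = _ := by rw [Finset.sum_const, nsmul_eq_mul]
  · refine iUnion₂_subset fun x hx y hy => or_iff_not_imp_right.2 fun hyB => ?_
    rw [mem_ofPred_eq, not_le, birkhoffAverage, smul_eq_mul, inv_mul_lt_iff₀ (by positivity),
      mul_comm] at hyB
    simpa using ⟨x, hx, (hv x y hy).trans hyB.le⟩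

variable [MeasurableSpace X] {μ : Measure X}

theorem exists_isClosed_eventually_measureReal_thickening_sdiff_le [BorelSpace X]
    [IsFiniteMeasure μ] {s : Set X} (hs : MeasurableSet s) {η : ℝ} (hη : 0 < η) :
    ∃ F ⊆ s, IsClosed F ∧ ∀ᶠ δ in 𝓝[>] 0, μ.real ((s ∪ Metric.thickening δ F) \ F) ≤ η := by
  obtain ⟨F, hFs, hF, hsF⟩ := hs.exists_isClosed_sdiff_lt (μ := μ) (measure_ne_top _ _)
    (ENNReal.ofReal_pos.2 (half_pos hη)).ne'
  have hlim : Tendsto (fun δ => μ.real (Metric.thickening δ F)) (𝓝[>] 0) (𝓝 (μ.real F)) :=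
    (ENNReal.tendsto_toReal (measure_ne_top _ _)).comp
      (tendsto_measure_thickening_of_isClosed ⟨1, one_pos, measure_ne_top _ _⟩ hF)
  refine ⟨F, hFs, hF, ?_⟩
  filter_upwards [hlim.eventually_le_const (lt_add_of_pos_right _ (half_pos hη)),
    self_mem_nhdsWithin] with δ hδ hδ0
  rw [union_sdiff_distrib]
  refine (measureReal_union_le _ _).trans ?_
  rw [measureReal_sdiff (Metric.self_subset_thickening hδ0 F) hF.measurableSet]
  linarith [ENNReal.toReal_le_of_le_ofReal (half_pos hη).le hsF.le, measureReal_def μ (s \ F)]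

theorem exists_label_eq_of_dist_lt [BorelSpace X] [IsFiniteMeasure μ] [Finite A]
    [MeasurableSpace A] [MeasurableSingletonClass A] (hl : Measurable l) {η : ℝ} (hη : 0 < η) :
    ∃ B, MeasurableSet B ∧ μ.real B ≤ η ∧
      ∃ δ > 0, ∀ x ∉ B, ∀ y ∉ B, dist x y < δ → l x = l y := by
  cases nonempty_fintype A
  choose F hFsub hF hFμ using fun a =>
    exists_isClosed_eventually_measureReal_thickening_sdiff_le (μ := μ)
      (hl (measurableSet_singleton a)) (η := η / (Fintype.card A + 1)) (by positivity)
  obtain ⟨δ, hδ, hδ0⟩ := ((eventually_all.2 hFμ).and self_mem_nhdsWithin).exists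
  -- Off this union, points of label `a` and points within `δ` of `F a` both lie in `F a`.
  refine ⟨⋃ a, (l ⁻¹' {a} ∪ Metric.thickening δ (F a)) \ F a, .iUnion fun a =>
    ((hl (measurableSet_singleton a)).union Metric.isOpen_thickening.measurableSet).diff
      (hF a).measurableSet, ?_, δ, hδ0, fun x hx y hy hxy => ?_⟩
  · calc _ ≤ ∑ a, μ.real ((l ⁻¹' {a} ∪ Metric.thickening δ (F a)) \ F a) :=
          measureReal_iUnion_fintype_le _
      _ ≤ ∑ _a : A, η / (Fintype.card A + 1) := Finset.sum_le_sum fun a _ => hδ a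
      _ ≤ η := by
          rw [Finset.sum_const, nsmul_eq_mul, Finset.card_univ, mul_div_left_comm]
          exact mul_le_of_le_one_right hη.le ((div_le_one (by positivity)).2 (by linarith))
  · simp only [mem_iUnion, Set.mem_sdiff, mem_union, not_exists, not_and, not_not] at hx hy
    have hxF : x ∈ F (l x) := hx _ (.inl rfl)
    have hyF := hy _ (.inr (Metric.mem_thickening_iff.2 ⟨x, hxF, dist_comm x y ▸ hxy⟩))
    exact (hFsub _ hyF).symm

variable [BorelSpace X] [IsProbabilityMeasure μ] [MeasurableSpace A]
  [MeasurableSingletonClass A]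

theorem eventually_exists_words_of_katokCoverNum [Finite A]
    (hX : TotallyBounded (univ : Set X)) (hf : MeasurePreserving f μ μ) (hl : Measurable l)
    (hγ : 0 ≤ γ) {η : ℝ} (hη : 0 < η) (hδ : 0 < δ) :
    ∀ᶠ ε in 𝓝[>] 0, ∀ n ≠ 0, ∃ U : Finset (Fin n → A),
      (#U : ℝ) ≤ katokCoverNum μ f n ε γ * Real.exp (n * δ) ∧
      1 - γ - η ≤ μ.real (itinerary f l n ⁻¹' U) := by
  cases nonempty_fintype A
  obtain ⟨β, hβδ, hβ⟩ : ∃ β, Fintype.card A * Real.exp (-β) ≤ δ / 2 ∧ 0 < β := by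
    have hlim := (Real.tendsto_exp_neg_atTop_nhds_zero.const_mul (Fintype.card A : ℝ))
    rw [mul_zero] at hlim
    exact ((hlim.eventually_le_const (half_pos hδ)).and (eventually_gt_atTop 0)).exists
  have hθ : 0 < δ / (2 * β) := by positivity
  obtain ⟨B, hBm, hBμ, δ₀, hδ₀, hB⟩ := exists_label_eq_of_dist_lt (μ := μ) hl (mul_pos hθ hη)
  filter_upwards [Ioo_mem_nhdsGT (half_pos hδ₀)] with ε hε n hn
  obtain ⟨S, hS, hSμ⟩ :=
    exists_finset_card_eq_katokCoverNum (μ := μ) (f := f) (n := n) hX hε.1 hγ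
  obtain ⟨U, hU, hSU⟩ := exists_words_of_iUnion_bowenBall (f := f) (ε := ε) (θ := δ / (2 * β))
    hB (by linarith [hε.2]) hβ.le hn S
  refine ⟨U, hU.trans ?_, ?_⟩
  · rw [hS, show β * (δ / (2 * β)) = δ / 2 by field_simp]
    gcongr
    linarith
  · have hvisits := mul_measureReal_le_birkhoffAverage_le_integral hf (g := B.indicator 1)
      ((integrable_const 1).indicator hBm) (indicator_nonneg fun _ _ => zero_le_one) hn
      (δ / (2 * β))
    rw [integral_indicator_one hBm] at hvisits
    linarith [le_of_mul_le_mul_left (hvisits.trans hBμ) hθ, measureReal_mono hSU (μ := μ),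
      measureReal_union_le (μ := μ) (itinerary f l n ⁻¹' U)
        {y | δ / (2 * β) ≤ birkhoffAverage ℝ f (B.indicator 1) n y}]

theorem eventually_le_liminf_katokCoverNum [Fintype A] (hX : TotallyBounded (univ : Set X))
    (hμ : Ergodic f μ) (hl : Measurable l) (hγ : γ ∈ Ioo (0 : ℝ) 1) {r : ℝ}
    (hr : r < entropyRate μ f l) :
    ∀ᶠ ε in 𝓝[>] 0, (r : EReal) ≤
      atTop.liminf fun n : ℕ => ((Real.log (katokCoverNum μ f n ε γ) / n : ℝ) : EReal) := by
  obtain ⟨s, hrs, hs⟩ := EReal.lt_iff_exists_real_btwn.1 hr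
  have hγ' : 0 < (1 - γ) / 2 := half_pos (sub_pos.2 hγ.2)
  filter_upwards [self_mem_nhdsWithin, eventually_exists_words_of_katokCoverNum hX
    hμ.toMeasurePreserving hl hγ.1.le hγ' (sub_pos.2 (EReal.coe_lt_coe_iff.1 hrs))] with ε hε hU
  refine le_liminf_of_le (h := ?_)
  filter_upwards [eventually_exp_le_card_of_le_measureReal hμ hl hs hγ', eventually_gt_atTop 0]
    with n hn hn0
  obtain ⟨U, hUN, hUμ⟩ := hU n hn0.ne'
  have hN : (0 : ℝ) < katokCoverNum μ f n ε γ := Nat.cast_pos.2 (katokCoverNum_pos hX hε hγ)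
  have hexp : Real.exp (n * r) * Real.exp (n * (s - r)) ≤
      katokCoverNum μ f n ε γ * Real.exp (n * (s - r)) := by
    rw [← Real.exp_add, ← mul_add, add_sub_cancel]
    exact (hn U (by linarith)).trans hUN
  rw [EReal.coe_le_coe_iff, le_div_iff₀ (by positivity), mul_comm, Real.le_log_iff_exp_le hN]
  exact le_of_mul_le_mul_right hexp (Real.exp_pos _)

theorem eventually_lt_liminf_katokCoverNum (hX : TotallyBounded (univ : Set X))
    (hμ : Ergodic f μ) (hγ : γ ∈ Ioo (0 : ℝ) 1) {a : EReal} (ha : a < metricEntropy μ f) :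
    ∀ᶠ ε in 𝓝[>] 0, a <
      atTop.liminf fun n : ℕ => ((Real.log (katokCoverNum μ f n ε γ) / n : ℝ) : EReal) := by
  rw [metricEntropy_eq_iSup_entropyRate, lt_iSup_iff] at ha
  obtain ⟨P, hP⟩ := ha
  obtain ⟨r, har, hr⟩ := EReal.lt_iff_exists_real_btwn.1 hP
  exact (eventually_le_liminf_katokCoverNum hX hμ P.2.measurable_label hγ hr).mono
    fun _ => har.trans_le

end LowerBound

theorem katok_entropy_formula_general {X : Type*} [PseudoMetricSpace X] [MeasurableSpace X]
    [BorelSpace X] (hX : TotallyBounded (univ : Set X)) {f : X → X} {μ : Measure X}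
    [IsProbabilityMeasure μ] (hμ : Ergodic f μ) {γ : ℝ} (hγ : γ ∈ Ioo (0 : ℝ) 1) :
    Tendsto (fun ε : ℝ => atTop.liminf
        fun n : ℕ => ((Real.log (katokCoverNum μ f n ε γ) / n : ℝ) : EReal))
      (𝓝[>] 0) (𝓝 (metricEntropy μ f)) ∧
    Tendsto (fun ε : ℝ => atTop.limsup
        fun n : ℕ => ((Real.log (katokCoverNum μ f n ε γ) / n : ℝ) : EReal))
      (𝓝[>] 0) (𝓝 (metricEntropy μ f)) := by
  have hlimsup : ∀ᶠ ε in 𝓝[>] 0, atTop.limsup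
      (fun n : ℕ => ((Real.log (katokCoverNum μ f n ε γ) / n : ℝ) : EReal)) ≤
        metricEntropy μ f :=
    eventually_mem_nhdsWithin.mono fun _ hε => limsup_katokCoverNum_le_metricEntropy hX hμ hε hγ
  have hliminf : Tendsto (fun ε : ℝ => atTop.liminf
      fun n : ℕ => ((Real.log (katokCoverNum μ f n ε γ) / n : ℝ) : EReal))
      (𝓝[>] 0) (𝓝 (metricEntropy μ f)) :=
    tendsto_order.2 ⟨fun a ha => eventually_lt_liminf_katokCoverNum hX hμ hγ ha,
      fun a ha => hlimsup.mono fun _ h => (le_trans liminf_le_limsup h).trans_lt ha⟩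
  exact ⟨hliminf, tendsto_of_tendsto_of_tendsto_of_le_of_le' hliminf tendsto_const_nhds
    (.of_forall fun _ => liminf_le_limsup) hlimsup⟩

/-- Katok's entropy formula. Let `(X,d)` be a compact metric space,
`f : X → X` continuous and `μ` an ergodic `f`-invariant Borel probability measure. For every
`γ ∈ (0,1)`,
`h_μ(f) = lim_{ε→0} liminf_n (1/n) log N^μ(n,ε,γ) = lim_{ε→0} limsup_n (1/n) log N^μ(n,ε,γ)`. -/
theorem katok_entropy_formula {X : Type*} [MetricSpace X] [CompactSpace X]
    [MeasurableSpace X] [BorelSpace X]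
    (f : X → X) (hf : Continuous f)
    (μ : Measure X) [IsProbabilityMeasure μ] (hμ : Ergodic f μ)
    (γ : ℝ) (hγ : γ ∈ Set.Ioo (0:ℝ) 1) :
    Filter.Tendsto
        (fun ε : ℝ => Filter.atTop.liminf
          (fun n : ℕ => ((Real.log (katokCoverNum μ f n ε γ) / n : ℝ) : EReal)))
        (nhdsWithin 0 (Set.Ioi 0)) (nhds (metricEntropy μ f)) ∧
    Filter.Tendsto
        (fun ε : ℝ => Filter.atTop.limsup
          (fun n : ℕ => ((Real.log (katokCoverNum μ f n ε γ) / n : ℝ) : EReal)))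
        (nhdsWithin 0 (Set.Ioi 0)) (nhds (metricEntropy μ f)) :=
  katok_entropy_formula_general isCompact_univ.totallyBounded hμ hγ

end
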